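/- Strong completeness of ELD: for every formula φ and every set Φ of formulas of the language ELD, if Φ semantically entails φ over similarity models (every pointed similarity model satisfying all formulas of Φ satisfies φ), then Φ ⊢_ELD φ (i.e., there is a finite subset {ψ_1,…,ψ_n} ⊆ Φ such that (ψ_1 ∧ … ∧ ψ_n) → φ is a theorem of ELD). -/

import Mathlib

/-- Formulas of the language ELD over a set `Ag` of agents, with
propositional variables drawn from the countably infinite set `ℕ`.  Groups
are nonempty finite sets of agents. -/
inductive Formula (Ag : Type) : Type
  | atom : ℕ → Formula Ag
  | neg  : Formula Ag → Formula Ag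
  | impl : Formula Ag → Formula Ag → Formula Ag
  | K    : Ag → Formula Ag → Formula Ag
  | D    : (G : Finset Ag) → G.Nonempty → Formula Ag → Formula Ag

/-- A similarity model `(W, A, E, C, ν)`. -/
structure SimModel (Ag : Type) where
  W : Type
  A : Type
  w_nonempty : Nonempty W
  E : W → W → Set A
  Cap : Ag → Set A
  val : W → Set ℕ
  positivity : ∀ s t : W, E s t = Set.univ → s = t
  symmetry : ∀ s t : W, E s t = E t s

/-- Satisfaction on similarity models. -/
def SimModel.sat {Ag : Type} (M : SimModel Ag) : M.W → Formula Ag → Prop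
  | s, .atom p => p ∈ M.val s
  | s, .neg φ => ¬ M.sat s φ
  | s, .impl φ ψ => M.sat s φ → M.sat s ψ
  | s, .K a φ => ∀ t, M.Cap a ⊆ M.E s t → M.sat t φ
  | s, .D G _ φ => ∀ t, (⋃ a ∈ G, M.Cap a) ⊆ M.E s t → M.sat t φ

namespace Formula
/-- Conjunction, defined from the primitive connectives. -/
def and {Ag : Type} (φ ψ : Formula Ag) : Formula Ag := .neg (φ.impl ψ.neg)
/-- A fixed tautology. -/
def top {Ag : Type} : Formula Ag := (atom 0).impl (atom 0)
/-- Biconditional, defined from the primitive connectives. -/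
def iff {Ag : Type} (φ ψ : Formula Ag) : Formula Ag := (φ.impl ψ).and (ψ.impl φ)
end Formula

/-- `φ` is a propositional tautology: it evaluates to `true` under every
assignment of truth values to formulas that respects negation and implication
(thereby treating atoms and modal formulas as propositional atoms). -/
def IsTautology {Ag : Type} (φ : Formula Ag) : Prop :=
  ∀ v : Formula Ag → Bool,
    (∀ ψ : Formula Ag, v ψ.neg = !v ψ) →
    (∀ ψ χ : Formula Ag, v (ψ.impl χ) = (!v ψ || v χ)) →
    v φ = true

/-- The axiomatic system ELD: the least set of formulas containing all propositional tautologies, closed under modus ponens and necessitation for each `K_a`, and containing the axiom schemes K, B, KD, D1, D2 and BD. -/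
inductive Prov {Ag : Type} : Formula Ag → Prop
  | taut {φ : Formula Ag} : IsTautology φ → Prov φ
  | mp {φ ψ : Formula Ag} : Prov (φ.impl ψ) → Prov φ → Prov ψ
  | nec {φ : Formula Ag} (a : Ag) : Prov φ → Prov (.K a φ)
  | kK {φ ψ : Formula Ag} (a : Ag) :
      Prov ((Formula.K a (φ.impl ψ)).impl ((Formula.K a φ).impl (.K a ψ)))
  | axB {φ : Formula Ag} (a : Ag) :
      Prov (φ.impl (.K a (Formula.neg (.K a φ.neg))))
  | kD {φ ψ : Formula Ag} (G : Finset Ag) (hG : G.Nonempty) :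
      Prov ((Formula.D G hG (φ.impl ψ)).impl ((Formula.D G hG φ).impl (.D G hG ψ)))
  | d1 {φ : Formula Ag} (a : Ag) :
      Prov ((Formula.D {a} (Finset.singleton_nonempty a) φ).iff (.K a φ))
  | d2 {φ : Formula Ag} (G H : Finset Ag) (hG : G.Nonempty) (hH : H.Nonempty)
      (hGH : G ⊆ H) : Prov ((Formula.D G hG φ).impl (.D H hH φ))
  | bd {φ : Formula Ag} (G : Finset Ag) (hG : G.Nonempty) :
      Prov (φ.impl (.D G hG (Formula.neg (.D G hG φ.neg))))

/-!
A set `Φ` not deriving `φ` extends to a maximal consistent set omitting `φ`, so it suffices to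
realise every maximal consistent set as the theory of a point in a similarity model.

In the usual canonical model, points `s` and `t` may be related for two groups `G` and `H` without
being related for `G ∪ H`, whereas in a similarity model `C(G) ⊆ E(s, t)` and `C(H) ⊆ E(s, t)` give
`C(G ∪ H) ⊆ E(s, t)`. We therefore take as worlds pairs of a maximal consistent set and a finite set
of agents, its *label*: the only group for which two worlds can be related, along with its
subgroups, is the symmetric difference of their labels. Every group `G` remains available from
every world, by moving to the label which differs from the current one by exactly `G`. Letting each
agent be its own ability, and adding an ability never shared, makes this a similarity model.
-/

section

variable {Ag : Type} {Γ Δ : Set (Formula Ag)} {φ ψ χ : Formula Ag} {L L₁ L₂ : List (Formula Ag)}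

/-- The conjunction of a finite list of formulas, associated to the right and ending in `top`. -/
def Formula.conj (L : List (Formula Ag)) : Formula Ag := L.foldr Formula.and Formula.top

theorem Formula.eval_conj_eq_true_iff {v : Formula Ag → Bool}
    (hneg : ∀ ψ : Formula Ag, v ψ.neg = !v ψ)
    (himpl : ∀ ψ χ : Formula Ag, v (ψ.impl χ) = (!v ψ || v χ)) (L : List (Formula Ag)) :
    v (Formula.conj L) = true ↔ ∀ ψ ∈ L, v ψ = true := by
  induction L with
  | nil => simp [Formula.conj, Formula.top, himpl]
  | cons ψ L ih =>
    have hcons : Formula.conj (ψ :: L) = ψ.and (Formula.conj L) := rfl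
    simp [hcons, Formula.and, hneg, himpl, ih]

namespace Prov

theorem impl_self (φ : Formula Ag) : Prov (φ.impl φ) :=
  taut fun v _ himpl => by simp [himpl]

theorem impl_impl_self (φ ψ : Formula Ag) : Prov (φ.impl (ψ.impl φ)) :=
  taut fun v _ himpl => by grind

theorem impl_distrib (χ φ ψ : Formula Ag) :
    Prov ((χ.impl (φ.impl ψ)).impl ((χ.impl φ).impl (χ.impl ψ))) :=
  taut fun v _ himpl => by grind

theorem neg_impl_impl (φ ψ : Formula Ag) : Prov (φ.neg.impl (φ.impl ψ)) :=
  taut fun v hneg himpl => by grind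

theorem impl_neg_neg (φ : Formula Ag) : Prov (φ.impl φ.neg.neg) :=
  taut fun v hneg himpl => by grind

theorem impl_of_cases (φ ψ : Formula Ag) :
    Prov ((φ.impl ψ).impl ((φ.neg.impl ψ).impl ψ)) :=
  taut fun v hneg himpl => by grind

theorem iff_impl (φ ψ : Formula Ag) : Prov ((φ.iff ψ).impl (φ.impl ψ)) :=
  taut fun v hneg himpl => by grind [Formula.iff, Formula.and]

theorem iff_impl_symm (φ ψ : Formula Ag) : Prov ((φ.iff ψ).impl (ψ.impl φ)) :=
  taut fun v hneg himpl => by grind [Formula.iff, Formula.and]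

theorem conj_impl_of_mem (h : φ ∈ L) : Prov ((Formula.conj L).impl φ) :=
  taut fun v hneg himpl => by
    have hconj : v (Formula.conj L) = true → v φ = true := fun hL =>
      (Formula.eval_conj_eq_true_iff hneg himpl L).mp hL φ h
    simpa [himpl, imp_iff_not_or] using hconj

theorem conj_impl_conj_of_subset (h : L₁ ⊆ L₂) :
    Prov ((Formula.conj L₂).impl (Formula.conj L₁)) :=
  taut fun v hneg himpl => by
    have hconj : v (Formula.conj L₂) = true → v (Formula.conj L₁) = true := by
      simp only [Formula.eval_conj_eq_true_iff hneg himpl]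
      exact fun hL₂ ψ hψ => hL₂ ψ (h hψ)
    simpa [himpl, imp_iff_not_or] using hconj

theorem weaken (χ : Formula Ag) (h : Prov φ) : Prov (χ.impl φ) :=
  mp (impl_impl_self φ χ) h

theorem mp_under (himpl : Prov (χ.impl (φ.impl ψ))) (h : Prov (χ.impl φ)) : Prov (χ.impl ψ) :=
  mp (mp (impl_distrib χ φ ψ) himpl) h

theorem impl_trans (h₁ : Prov (φ.impl ψ)) (h₂ : Prov (ψ.impl χ)) : Prov (φ.impl χ) :=
  mp_under (weaken φ h₂) h₁

theorem D_singleton_impl_K (a : Ag) (φ : Formula Ag) :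
    Prov ((Formula.D {a} (Finset.singleton_nonempty a) φ).impl (.K a φ)) :=
  mp (iff_impl _ _) (d1 a)

theorem K_impl_D_singleton (a : Ag) (φ : Formula Ag) :
    Prov ((Formula.K a φ).impl (.D {a} (Finset.singleton_nonempty a) φ)) :=
  mp (iff_impl_symm _ _) (d1 a)

theorem necD (G : Finset Ag) (hG : G.Nonempty) (h : Prov φ) : Prov (.D G hG φ) := by
  obtain ⟨a, ha⟩ := id hG
  have hsub : {a} ⊆ G := Finset.singleton_subset_iff.mpr ha
  exact mp (d2 {a} G (Finset.singleton_nonempty a) hG hsub) (mp (K_impl_D_singleton a φ) (nec a h))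

end Prov

/-- `Γ ⊢ φ`, presented inductively: `φ` follows from members of `Γ` and theorems of ELD by modus
ponens alone, so that necessitation never applies to an assumption. -/
inductive Derivable (Γ : Set (Formula Ag)) : Formula Ag → Prop
  | of_mem {φ : Formula Ag} : φ ∈ Γ → Derivable Γ φ
  | of_prov {φ : Formula Ag} : Prov φ → Derivable Γ φ
  | mp {φ ψ : Formula Ag} : Derivable Γ (φ.impl ψ) → Derivable Γ φ → Derivable Γ ψ

namespace Derivable

theorem exists_conj_impl (h : Derivable Γ φ) :
    ∃ L : List (Formula Ag), (∀ ψ ∈ L, ψ ∈ Γ) ∧ Prov ((Formula.conj L).impl φ) := by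
  induction h with
  | @of_mem φ hφ => exact ⟨[φ], by simpa using hφ, .conj_impl_of_mem (List.mem_singleton_self φ)⟩
  | of_prov hφ => exact ⟨[], by simp, hφ.weaken _⟩
  | mp _ _ ih_impl ih =>
    obtain ⟨L₁, hL₁, himpl⟩ := ih_impl
    obtain ⟨L₂, hL₂, hφ⟩ := ih
    have himpl' := (Prov.conj_impl_conj_of_subset (List.subset_append_left L₁ L₂)).impl_trans himpl
    have hφ' := (Prov.conj_impl_conj_of_subset (List.subset_append_right L₁ L₂)).impl_trans hφ
    exact ⟨L₁ ++ L₂, List.forall_mem_append.mpr ⟨hL₁, hL₂⟩, himpl'.mp_under hφ'⟩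

theorem mono (h : Derivable Γ φ) (hΓΔ : Γ ⊆ Δ) : Derivable Δ φ := by
  induction h with
  | of_mem hφ => exact of_mem (hΓΔ hφ)
  | of_prov hφ => exact of_prov hφ
  | mp _ _ ih_impl ih => exact mp ih_impl ih

theorem weaken (χ : Formula Ag) (h : Derivable Γ φ) : Derivable Γ (χ.impl φ) :=
  mp (of_prov (.impl_impl_self φ χ)) h

theorem impl_of_insert (h : Derivable (insert χ Γ) φ) : Derivable Γ (χ.impl φ) := by
  induction h with
  | of_mem hφ =>
    rcases hφ with rfl | hφ
    · exact of_prov (.impl_self _)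
    · exact (of_mem hφ).weaken χ
  | of_prov hφ => exact (of_prov hφ).weaken χ
  | mp _ _ ih_impl ih => exact mp (mp (of_prov (.impl_distrib χ _ _)) ih_impl) ih

theorem exists_mem_of_sUnion {c : Set (Set (Formula Ag))} (hc : IsChain (· ⊆ ·) c)
    (hne : c.Nonempty) (h : Derivable (⋃₀ c) φ) : ∃ Γ ∈ c, Derivable Γ φ := by
  induction h with
  | of_mem hφ =>
    obtain ⟨Γ, hΓ, hφΓ⟩ := hφ
    exact ⟨Γ, hΓ, of_mem hφΓ⟩
  | of_prov hφ =>
    obtain ⟨Γ, hΓ⟩ := hne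
    exact ⟨Γ, hΓ, of_prov hφ⟩
  | mp _ _ ih_impl ih =>
    obtain ⟨Γ, hΓ, himpl⟩ := ih_impl
    obtain ⟨Δ, hΔ, hφ⟩ := ih
    rcases hc.total hΓ hΔ with hΓΔ | hΔΓ
    · exact ⟨Δ, hΔ, mp (himpl.mono hΓΔ) hφ⟩
    · exact ⟨Γ, hΓ, mp himpl (hφ.mono hΔΓ)⟩

theorem D_mem {G : Finset Ag} {hG : G.Nonempty} (hΓ : ∀ ψ, Derivable Γ ψ → ψ ∈ Γ)
    (h : Derivable {ψ | Formula.D G hG ψ ∈ Γ} φ) : Formula.D G hG φ ∈ Γ := by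
  induction h with
  | of_mem hφ => exact hφ
  | of_prov hφ => exact hΓ _ (of_prov (hφ.necD G hG))
  | mp _ _ ih_impl ih => exact hΓ _ (mp (mp (of_prov (.kD G hG)) (of_mem ih_impl)) (of_mem ih))

end Derivable

/-- Maximal consistent sets of formulas, given by the two properties that characterise them:
closure under derivability and containing exactly one of `φ` and `¬φ` for each `φ`. -/
structure IsMaximalConsistent (Γ : Set (Formula Ag)) : Prop where
  mem_of_derivable : ∀ φ, Derivable Γ φ → φ ∈ Γ
  neg_mem_iff : ∀ φ : Formula Ag, φ.neg ∈ Γ ↔ φ ∉ Γ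

theorem exists_maximal_not_derivable (h : ¬ Derivable Γ φ) :
    ∃ Δ, Γ ⊆ Δ ∧ Maximal (fun Δ' => ¬ Derivable Δ' φ) Δ := by
  refine zorn_subset_nonempty {Δ | ¬ Derivable Δ φ} (fun c hcφ hc hne => ?_) Γ h
  refine ⟨⋃₀ c, fun hφ => ?_, fun _ => Set.subset_sUnion_of_mem⟩
  obtain ⟨Δ, hΔ, hΔφ⟩ := hφ.exists_mem_of_sUnion hc hne
  exact hcφ hΔ hΔφ

theorem isMaximalConsistent_of_maximal_not_derivable
    (h : Maximal (fun Δ => ¬ Derivable Δ φ) Γ) : IsMaximalConsistent Γ := by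
  have derivable_impl {ψ : Formula Ag} (hψ : ψ ∉ Γ) : Derivable Γ (ψ.impl φ) := by
    by_contra hψφ
    have hins : ¬ Derivable (insert ψ Γ) φ := fun hφ => hψφ hφ.impl_of_insert
    exact hψ (h.le_of_ge hins (Set.subset_insert ψ Γ) (Set.mem_insert ψ Γ))
  refine ⟨fun ψ hψ => ?_, fun ψ => ⟨fun hneg hψ => ?_, fun hψ => ?_⟩⟩
  · by_contra hψΓ
    exact h.prop (.mp (derivable_impl hψΓ) hψ)
  · exact h.prop (.mp (.mp (.of_prov (.neg_impl_impl ψ φ)) (.of_mem hneg)) (.of_mem hψ))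
  · by_contra hneg
    exact h.prop
      (.mp (.mp (.of_prov (.impl_of_cases ψ φ)) (derivable_impl hψ)) (derivable_impl hneg))

theorem exists_isMaximalConsistent_of_not_derivable (h : ¬ Derivable Γ φ) :
    ∃ Δ, IsMaximalConsistent Δ ∧ Γ ⊆ Δ ∧ φ ∉ Δ := by
  obtain ⟨Δ, hΓΔ, hΔ⟩ := exists_maximal_not_derivable h
  exact ⟨Δ, isMaximalConsistent_of_maximal_not_derivable hΔ, hΓΔ, fun hφ => hΔ.prop (.of_mem hφ)⟩

/-- The relation `R_G` of the canonical Kripke model: `t` contains every `φ` with `D_G φ` in `s`.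
For `G = ∅`, which has no operator, it holds between any two sets. -/
def CanonicalRel (G : Finset Ag) (s t : Set (Formula Ag)) : Prop :=
  ∀ (hG : G.Nonempty) (φ : Formula Ag), Formula.D G hG φ ∈ s → φ ∈ t

section

variable {G H : Finset Ag} {s t : Set (Formula Ag)}

namespace IsMaximalConsistent

theorem mem_of_prov (hs : IsMaximalConsistent s) (h : Prov φ) : φ ∈ s :=
  hs.mem_of_derivable φ (.of_prov h)

theorem mem_of_impl_mem (hs : IsMaximalConsistent s) (himpl : φ.impl ψ ∈ s) (hφ : φ ∈ s) :
    ψ ∈ s :=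
  hs.mem_of_derivable ψ (.mp (.of_mem himpl) (.of_mem hφ))

theorem mem_of_prov_impl (hs : IsMaximalConsistent s) (himpl : Prov (φ.impl ψ)) (hφ : φ ∈ s) :
    ψ ∈ s :=
  hs.mem_of_impl_mem (hs.mem_of_prov himpl) hφ

theorem impl_mem_iff (hs : IsMaximalConsistent s) : φ.impl ψ ∈ s ↔ (φ ∈ s → ψ ∈ s) := by
  refine ⟨hs.mem_of_impl_mem, fun h => ?_⟩
  by_cases hφ : φ ∈ s
  · exact hs.mem_of_prov_impl (.impl_impl_self ψ φ) (h hφ)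
  · exact hs.mem_of_prov_impl (.neg_impl_impl φ ψ) ((hs.neg_mem_iff φ).mpr hφ)

theorem K_mem_iff (hs : IsMaximalConsistent s) {a : Ag} :
    Formula.K a φ ∈ s ↔ Formula.D {a} (Finset.singleton_nonempty a) φ ∈ s :=
  ⟨hs.mem_of_prov_impl (.K_impl_D_singleton a φ), hs.mem_of_prov_impl (.D_singleton_impl_K a φ)⟩

theorem D_mem_iff (hs : IsMaximalConsistent s) (hG : G.Nonempty) :
    Formula.D G hG φ ∈ s ↔ ∀ t, IsMaximalConsistent t → CanonicalRel G s t → φ ∈ t := by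
  refine ⟨fun h t _ hst => hst hG φ h, fun h => ?_⟩
  by_contra hD
  obtain ⟨t, ht, hst, hφ⟩ := exists_isMaximalConsistent_of_not_derivable
    fun hφ : Derivable {ψ | Formula.D G hG ψ ∈ s} φ => hD (hφ.D_mem hs.mem_of_derivable)
  exact hφ (h t ht fun _ _ hψ => hst hψ)

end IsMaximalConsistent

namespace CanonicalRel

theorem symm (hs : IsMaximalConsistent s) (ht : IsMaximalConsistent t) (h : CanonicalRel G s t) :
    CanonicalRel G t s := by
  intro hG χ hχ
  by_contra hχs
  have hneg : Formula.neg (.D G hG χ.neg.neg) ∈ t :=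
    h hG _ (hs.mem_of_prov_impl (.bd G hG) ((hs.neg_mem_iff χ).mpr hχs))
  have hD : Formula.D G hG χ.neg.neg ∈ t :=
    ht.mem_of_prov_impl (.mp (.kD G hG) (.necD G hG (.impl_neg_neg χ))) hχ
  exact (ht.neg_mem_iff _).mp hneg hD

theorem anti (hs : IsMaximalConsistent s) (hGH : G ⊆ H) (h : CanonicalRel H s t) :
    CanonicalRel G s t :=
  fun hG φ hφ => h (hG.mono hGH) φ (hs.mem_of_prov_impl (.d2 G H hG _ hGH) hφ)

end CanonicalRel

end

theorem SimModel.sat_K_iff_sat_D_singleton (M : SimModel Ag) (s : M.W) (a : Ag) (φ : Formula Ag) :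
    M.sat s (.K a φ) ↔ M.sat s (.D {a} (Finset.singleton_nonempty a) φ) := by
  simp [SimModel.sat]

variable (Ag) in
/-- Worlds of the canonical similarity model: a maximal consistent set together with a finite set
of agents, an arbitrary label deciding for which groups two worlds can be related. -/
structure CanonicalWorld where
  theory : Set (Formula Ag)
  isMaximalConsistent : IsMaximalConsistent theory
  label : Finset Ag

section

variable [DecidableEq Ag]

namespace CanonicalWorld

/-- The group of agents by which the labels of two worlds differ. -/
def gap (x y : CanonicalWorld Ag) : Finset Ag := symmDiff x.label y.label

theorem gap_comm (x y : CanonicalWorld Ag) : x.gap y = y.gap x :=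
  symmDiff_comm x.label y.label

/-- The value `E(x, y)` of the canonical similarity model, whose abilities are the agents and
`none`: the agents in the gap `G` of `x` and `y` if these are related by `R_G`, and nothing
otherwise. -/
def sharedAbilities (x y : CanonicalWorld Ag) : Set (Option Ag) :=
  some '' {a | a ∈ x.gap y ∧ CanonicalRel (x.gap y) x.theory y.theory}

theorem sharedAbilities_comm (x y : CanonicalWorld Ag) :
    x.sharedAbilities y = y.sharedAbilities x := by
  have hrel : CanonicalRel (y.gap x) x.theory y.theory ↔ CanonicalRel (y.gap x) y.theory x.theory :=
    ⟨.symm x.isMaximalConsistent y.isMaximalConsistent,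
      .symm y.isMaximalConsistent x.isMaximalConsistent⟩
  simp only [sharedAbilities, x.gap_comm y, hrel]

theorem none_notMem_sharedAbilities (x y : CanonicalWorld Ag) : none ∉ x.sharedAbilities y := by
  simp [sharedAbilities]

theorem biUnion_subset_sharedAbilities_iff {G : Finset Ag} (hG : G.Nonempty)
    (x y : CanonicalWorld Ag) :
    (⋃ a ∈ G, {some a}) ⊆ x.sharedAbilities y ↔
      G ⊆ x.gap y ∧ CanonicalRel (x.gap y) x.theory y.theory := by
  have hmem : (⋃ a ∈ G, {some a}) ⊆ x.sharedAbilities y ↔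
      ∀ a ∈ G, a ∈ x.gap y ∧ CanonicalRel (x.gap y) x.theory y.theory := by
    simp [sharedAbilities]
  obtain ⟨b, hb⟩ := hG
  rw [hmem]
  exact ⟨fun h => ⟨fun a ha => (h a ha).1, (h b hb).2⟩, fun h a ha => ⟨h.1 ha, h.2⟩⟩

theorem D_mem_theory_iff {G : Finset Ag} (hG : G.Nonempty) (x : CanonicalWorld Ag) :
    Formula.D G hG φ ∈ x.theory ↔
      ∀ y : CanonicalWorld Ag, (⋃ a ∈ G, {some a}) ⊆ x.sharedAbilities y → φ ∈ y.theory := by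
  simp only [biUnion_subset_sharedAbilities_iff hG]
  refine ⟨fun hD y hy => hy.2.anti x.isMaximalConsistent hy.1 hG φ hD, fun h => ?_⟩
  rw [x.isMaximalConsistent.D_mem_iff hG]
  intro t ht hxt
  let y : CanonicalWorld Ag := ⟨t, ht, symmDiff x.label G⟩
  have hgap : x.gap y = G := symmDiff_symmDiff_cancel_left x.label G
  exact h y ⟨hgap.ge, hgap.symm ▸ hxt⟩

end CanonicalWorld

variable [Nonempty (CanonicalWorld Ag)]

variable (Ag) in
/-- The canonical similarity model, in which every agent is its own only ability. No two worlds
share the extra ability `none`, so positivity holds vacuously. -/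
def canonicalModel : SimModel Ag where
  W := CanonicalWorld Ag
  A := Option Ag
  w_nonempty := inferInstance
  E := CanonicalWorld.sharedAbilities
  Cap a := {some a}
  val x := {p | Formula.atom p ∈ x.theory}
  positivity x y h := absurd (h.ge (Set.mem_univ none)) (x.none_notMem_sharedAbilities y)
  symmetry := CanonicalWorld.sharedAbilities_comm

theorem canonicalModel_sat_iff (φ : Formula Ag) (x : CanonicalWorld Ag) :
    (canonicalModel Ag).sat x φ ↔ φ ∈ x.theory := by
  have sat_D {φ : Formula Ag} (ih : ∀ y, (canonicalModel Ag).sat y φ ↔ φ ∈ y.theory)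
      (G : Finset Ag) (hG : G.Nonempty) (x : CanonicalWorld Ag) :
      (canonicalModel Ag).sat x (.D G hG φ) ↔ Formula.D G hG φ ∈ x.theory := by
    rw [x.D_mem_theory_iff hG]
    exact forall_congr' fun y => imp_congr_right fun _ => ih y
  induction φ generalizing x with
  | atom p => exact Iff.rfl
  | neg φ ih => exact (not_congr (ih x)).trans (x.isMaximalConsistent.neg_mem_iff φ).symm
  | impl φ ψ ihφ ihψ =>
    exact (imp_congr (ihφ x) (ihψ x)).trans x.isMaximalConsistent.impl_mem_iff.symm
  | K a φ ih =>
    exact ((canonicalModel Ag).sat_K_iff_sat_D_singleton x a φ).trans <|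
      (sat_D ih {a} _ x).trans x.isMaximalConsistent.K_mem_iff.symm
  | D G hG φ ih => exact sat_D ih G hG x

end

theorem stmt_16_general (Φ : Set (Formula Ag)) (φ : Formula Ag)
    (h : ∀ (M : SimModel Ag) (s : M.W), (∀ ψ ∈ Φ, M.sat s ψ) → M.sat s φ) :
    ∃ L : List (Formula Ag), (∀ ψ ∈ L, ψ ∈ Φ) ∧
      Prov ((L.foldr Formula.and Formula.top).impl φ) := by
  classical
  suffices hφ : Derivable Φ φ from hφ.exists_conj_impl
  by_contra hφ
  obtain ⟨Δ, hΔ, hΦΔ, hφΔ⟩ := exists_isMaximalConsistent_of_not_derivable hφ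
  let x : CanonicalWorld Ag := ⟨Δ, hΔ, ∅⟩
  have : Nonempty (CanonicalWorld Ag) := ⟨x⟩
  have hΦ : ∀ ψ ∈ Φ, (canonicalModel Ag).sat x ψ := fun ψ hψ =>
    (canonicalModel_sat_iff ψ x).mpr (hΦΔ hψ)
  exact hφΔ ((canonicalModel_sat_iff φ x).mp (h (canonicalModel Ag) x hΦ))

end

/-- strong completeness of ELD: if `Φ` semantically entails
`φ` over similarity models, then some finite conjunction `ψ₁ ∧ … ∧ ψₙ` of
members of `Φ` is such that `(ψ₁ ∧ … ∧ ψₙ) → φ` is a theorem of ELD. -/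
theorem stmt_16 {Ag : Type} [Fintype Ag] [Nonempty Ag]
    (Φ : Set (Formula Ag)) (φ : Formula Ag)
    (h : ∀ (M : SimModel Ag) (s : M.W), (∀ ψ ∈ Φ, M.sat s ψ) → M.sat s φ) :
    ∃ L : List (Formula Ag), (∀ ψ ∈ L, ψ ∈ Φ) ∧
      Prov ((L.foldr Formula.and Formula.top).impl φ) :=
  stmt_16_general Φ φ h
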